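/- Let H be a 2-vertex-connected undirected graph with a DFS tree T rooted at r, let c be a vertex different from r, and let u be a vertex with u ≠ r. (i) If {p(c),(u,p(u))} is a vertex-edge cut-pair of H such that u is a descendant of c and high(u) is a proper ancestor of p(c), then M(u) = M_p(c). (ii) Conversely, if u is a proper descendant of c, M(u) = M_p(c), and high(u) is a proper ancestor of p(c), then {p(c),(u,p(u))} is a vertex-edge cut-pair of H. -/

import Mathlib

/-- A DFS tree of the graph `H`, rooted at `r`, given by a parent function:
it is a spanning tree (every vertex reaches the root by iterating the parent
function, and each non-root vertex is adjacent to its parent), and every edge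
of `H` joins a vertex to one of its ancestors. -/
structure DFSTree {V : Type*} (H : SimpleGraph V) (r : V) where
  par : V → V
  par_root : par r = r
  reaches_root : ∀ v : V, ∃ n : ℕ, par^[n] v = r
  par_adj : ∀ v : V, v ≠ r → H.Adj v (par v)
  edge_anc : ∀ x y : V, H.Adj x y → (∃ n : ℕ, par^[n] x = y) ∨ (∃ n : ℕ, par^[n] y = x)

namespace DFSTree

variable {V : Type*} {H : SimpleGraph V} {r : V} (T : DFSTree H r)

/-- `a` is an ancestor of `b` (every vertex is an ancestor of itself). -/
def Anc (a b : V) : Prop := ∃ n : ℕ, T.par^[n] b = a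

/-- `a` is a proper ancestor of `b`. -/
def PAnc (a b : V) : Prop := T.Anc a b ∧ a ≠ b

/-- `(x,y)` is a back-edge: an edge of `H` from `x` to an ancestor `y` of `x`
which is not the tree edge from `x` to its parent. -/
def BackEdge (x y : V) : Prop := H.Adj x y ∧ T.Anc y x ∧ T.par x ≠ y

/-- The set of descendants of `v` joined by a back-edge to a proper ancestor of `v`. -/
def MSet (v : V) : Set V := {x | T.Anc v x ∧ ∃ y, T.PAnc y v ∧ T.BackEdge x y}

/-- `m = M(v)`: `m` is the nearest common ancestor of all descendants of `v`
joined by a back-edge to a proper ancestor of `v`. -/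
def IsM (v m : V) : Prop :=
  (∀ x ∈ T.MSet v, T.Anc m x) ∧ ∀ m' : V, (∀ x ∈ T.MSet v, T.Anc m' x) → T.Anc m' m

/-- The set of descendants of `v` joined by a back-edge to a proper ancestor of `p(v)`. -/
def MpSet (v : V) : Set V := {x | T.Anc v x ∧ ∃ y, T.PAnc y (T.par v) ∧ T.BackEdge x y}

/-- `m = M_p(v)`: `m` is the nearest common ancestor of all descendants of `v`
joined by a back-edge to a proper ancestor of `p(v)`. -/
def IsMp (v m : V) : Prop :=
  (∀ x ∈ T.MpSet v, T.Anc m x) ∧ ∀ m' : V, (∀ x ∈ T.MpSet v, T.Anc m' x) → T.Anc m' m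

/-- `h = high(v)`: `h` is the deepest proper ancestor of `v` joined by a
back-edge to a descendant of `v`. -/
def IsHigh (v h : V) : Prop :=
  T.PAnc h v ∧ (∃ x, T.Anc v x ∧ T.BackEdge x h) ∧
    ∀ h' : V, T.PAnc h' v → (∃ x, T.Anc v x ∧ T.BackEdge x h') → T.Anc h' h

/-- `h = high_p(v)`: `h` is the deepest proper ancestor of `p(v)` joined by a
back-edge to a descendant of `v`. -/
def IsHighP (v h : V) : Prop :=
  T.PAnc h (T.par v) ∧ (∃ x, T.Anc v x ∧ T.BackEdge x h) ∧
    ∀ h' : V, T.PAnc h' (T.par v) → (∃ x, T.Anc v x ∧ T.BackEdge x h') → T.Anc h' h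

/-- `l = low(v)`: `l` is the proper ancestor of `v` nearest to the root joined
by a back-edge to a descendant of `v`. -/
def IsLow (v l : V) : Prop :=
  T.PAnc l v ∧ (∃ x, T.Anc v x ∧ T.BackEdge x l) ∧
    ∀ l' : V, T.PAnc l' v → (∃ x, T.Anc v x ∧ T.BackEdge x l') → T.Anc l l'

end DFSTree

/-- `{v, e}` is a vertex-edge cut-pair of `H`: `e` is an edge of `H` and deleting
both `v` (with its incident edges) and `e` disconnects `H`. -/
def VECutPair {V : Type*} (H : SimpleGraph V) (v : V) (e : Sym2 V) : Prop :=
  e ∈ H.edgeSet ∧ ¬ ((H.deleteEdges {e}).induce {u | u ≠ v}).Connected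

/-- `{e, e'}` is a cut-pair of `H`: `e` and `e'` are distinct edges of `H` whose
deletion disconnects `H`. -/
def ECutPair {V : Type*} (H : SimpleGraph V) (e e' : Sym2 V) : Prop :=
  e ∈ H.edgeSet ∧ e' ∈ H.edgeSet ∧ e ≠ e' ∧ ¬ (H.deleteEdges {e, e'}).Connected

/-- An undirected graph is 2-edge-connected if it is connected and has no bridge. -/
def TwoEdgeConnected {W : Type*} (G : SimpleGraph W) : Prop :=
  G.Connected ∧ ∀ e ∈ G.edgeSet, ¬ G.IsBridge e

/-- An undirected graph is 2-vertex-connected if it has at least three vertices,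
is connected, and deleting any single vertex leaves it connected. -/
def TwoVertexConnected {W : Type*} (G : SimpleGraph W) : Prop :=
  3 ≤ Nat.card W ∧ G.Connected ∧ ∀ v : W, (G.induce {u | u ≠ v}).Connected



namespace DFSTree
variable {V : Type*} {H : SimpleGraph V} {r : V} (T : DFSTree H r)

theorem anc_refl (a : V) : T.Anc a a := ⟨0, rfl⟩

theorem anc_trans {a b d : V} (h : T.Anc a b) (h' : T.Anc b d) : T.Anc a d := by
  obtain ⟨n, rfl⟩ := h
  obtain ⟨m, rfl⟩ := h'
  exact ⟨n + m, Function.iterate_add_apply _ _ _ _⟩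

theorem iter_root (n : ℕ) : T.par^[n] r = r := Function.iterate_fixed T.par_root n

theorem anc_antisymm {a b : V} (h : T.Anc a b) (h' : T.Anc b a) : a = b := by
  obtain ⟨n, h⟩ := h
  obtain ⟨m, h'⟩ := h'
  have hb : T.par^[m + n] b = b := by rw [Function.iterate_add_apply, h, h']
  obtain ⟨N, hN⟩ := T.reaches_root b
  rcases Nat.eq_zero_or_pos (m + n) with h0 | h0
  · have : n = 0 := by omega
    subst this
    exact h.symm
  · have h1 : T.par^[(m + n) * N] b = b := by
      rw [Function.iterate_mul]
      exact Function.iterate_fixed hb N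
    have h2 : N ≤ (m + n) * N := Nat.le_mul_of_pos_left N h0
    have h3 : T.par^[(m + n) * N] b = r := by
      obtain ⟨k, hk⟩ := Nat.exists_eq_add_of_le' h2
      rw [hk, Function.iterate_add_apply, hN, T.iter_root]
    have hbr : b = r := h1.symm.trans h3
    rw [hbr, T.iter_root] at h
    rw [hbr, h]

theorem anc_par (v : V) : T.Anc (T.par v) v := ⟨1, rfl⟩

theorem anc_par_of_ne {a v : V} (h : T.Anc a v) (hne : a ≠ v) : T.Anc a (T.par v) := by
  obtain ⟨n, h⟩ := h
  cases n with
  | zero => exact absurd h.symm hne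
  | succ n => exact ⟨n, h⟩

theorem anc_total {a b v : V} (h : T.Anc a v) (h' : T.Anc b v) : T.Anc a b ∨ T.Anc b a := by
  obtain ⟨n, rfl⟩ := h
  obtain ⟨m, rfl⟩ := h'
  rcases le_total n m with h | h
  · obtain ⟨k, rfl⟩ := Nat.exists_eq_add_of_le' h
    exact Or.inr ⟨k, (Function.iterate_add_apply _ _ _ _).symm⟩
  · obtain ⟨k, rfl⟩ := Nat.exists_eq_add_of_le' h
    exact Or.inl ⟨k, (Function.iterate_add_apply _ _ _ _).symm⟩

theorem root_anc (v : V) : T.Anc r v := T.reaches_root v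

theorem reach_up (p u a : V) (n : ℕ) : ∀ v : V, T.par^[n] v = a →
    (∀ w, T.Anc a w → T.Anc w v → w ≠ p) →
    (∀ w, T.Anc a w → w ≠ a → T.Anc w v → w ≠ u) →
    ∀ (hv : v ≠ p) (ha : a ≠ p),
    ((H.deleteEdges {s(u, T.par u)}).induce {x | x ≠ p}).Reachable ⟨v, hv⟩ ⟨a, ha⟩ := by
  induction n with
  | zero =>
    intro v h _ _ hv ha
    have h : v = a := h
    subst h
    exact SimpleGraph.Reachable.refl _
  | succ n ih =>
    intro v h h1 h2 hv ha
    have hav : T.Anc a v := ⟨_, h⟩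
    by_cases hva : v = a
    · subst hva
      exact SimpleGraph.Reachable.refl _
    have hap : T.Anc a (T.par v) := ⟨n, h⟩
    have hpv := T.anc_par v
    have hpp : T.par v ≠ p := h1 _ hap hpv
    have hvu : v ≠ u := h2 v hav hva (T.anc_refl v)
    have hvr : v ≠ r := by
      rintro rfl
      exact hva (T.anc_antisymm (T.root_anc a) hav)
    refine SimpleGraph.Reachable.trans (SimpleGraph.Adj.reachable ?_)
      (ih (T.par v) h (fun w q1 q2 => h1 w q1 (T.anc_trans q2 hpv))
        (fun w q1 q2 q3 => h2 w q1 q2 (T.anc_trans q3 hpv)) hpp ha)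
    rw [SimpleGraph.comap_adj]
    simp only [Function.Embedding.subtype_apply, SimpleGraph.deleteEdges_adj,
      Set.mem_singleton_iff]
    refine ⟨T.par_adj v hvr, fun he => ?_⟩
    rw [Sym2.eq_iff] at he
    rcases he with ⟨q, _⟩ | ⟨q, q'⟩
    · exact hvu q
    · exact hvu (T.anc_antisymm (q ▸ T.anc_par u) (q' ▸ T.anc_par v))

end DFSTree

theorem conn_of_adj {W : Type*} {G G' : SimpleGraph W} (h : G.Connected)
    (hadj : ∀ a b, G.Adj a b → G'.Reachable a b) : G'.Connected := by
  have := h.nonempty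
  refine SimpleGraph.Connected.mk fun a b => ?_
  obtain ⟨w⟩ := h.preconnected a b
  induction w with
  | nil => exact SimpleGraph.Reachable.refl _
  | cons q _ ih => exact (hadj _ _ q).trans ih

theorem inv_of_reach {W : Type*} {G : SimpleGraph W} (S : W → Prop)
    (hadj : ∀ a b, G.Adj a b → S a → S b) {a b : W} (h : G.Reachable a b) (ha : S a) : S b := by
  obtain ⟨w⟩ := h
  induction w with
  | nil => exact ha
  | cons q _ ih => exact ih (hadj _ _ q ha)

theorem stmt_14 {V : Type*} [Fintype V] (H : SimpleGraph V) (r : V)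
    (T : DFSTree H r) (hH : TwoVertexConnected H) (c u hgu mu mpc : V)
    (hc : c ≠ r) (hu : u ≠ r)
    (hmu : T.IsM u mu) (hmpc : T.IsMp c mpc) (hhgu : T.IsHigh u hgu) :
    (VECutPair H (T.par c) s(u, T.par u) → T.Anc c u → T.PAnc hgu (T.par c) →
      mu = mpc) ∧
    (T.PAnc c u → mu = mpc → T.PAnc hgu (T.par c) →
      VECutPair H (T.par c) s(u, T.par u)) := by
  have hcp : c ≠ T.par c := (T.par_adj c hc).ne
  obtain ⟨hg1, ⟨x', hx'u, hx'b⟩, hg3⟩ := hhgu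
  constructor
  · intro hcut hcu hgp
    have hup : ∀ w, T.Anc c w → w ≠ T.par c := by
      rintro w hw rfl
      exact hcp (T.anc_antisymm hw (T.anc_par c))
    have hpu : T.Anc (T.par c) u := T.anc_trans (T.anc_par c) hcu
    have key : T.MSet u = T.MpSet c := by
      ext x
      constructor
      · rintro ⟨hux, y, hyu, hb⟩
        have hyg := hg3 y hyu ⟨x, hux, hb⟩
        refine ⟨T.anc_trans hcu hux, y, ⟨T.anc_trans hyg hgp.1, ?_⟩, hb⟩
        rintro rfl
        exact hgp.2 (T.anc_antisymm hgp.1 hyg)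
      · rintro ⟨hcx, y, hyp, hb⟩
        have hyu : T.PAnc y u := by
          refine ⟨T.anc_trans hyp.1 hpu, ?_⟩
          rintro rfl
          exact hyp.2 (T.anc_antisymm hyp.1 hpu)
        by_cases hux : T.Anc u x
        · exact ⟨hux, y, hyu, hb⟩
        exfalso
        have huc : c ≠ u := by
          rintro rfl
          exact hux hcx
        have hcpu : T.Anc c (T.par u) := T.anc_par_of_ne hcu huc
        apply hcut.2
        have hrp : r ≠ T.par c := by
          intro h
          have this : T.Anc (T.par c) hgu := by
            obtain ⟨n, hn⟩ := T.root_anc hgu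
            exact ⟨n, hn.trans h⟩
          exact hgp.2 (T.anc_antisymm hgp.1 this)
        have e1 := hup u hcu
        have e2 := hup (T.par u) hcpu
        have e3 := hup x hcx
        have e4 := hup x' (T.anc_trans hcu hx'u)
        have e5 := hup c (T.anc_refl c)
        have top : ∀ z, (hz : T.PAnc z (T.par c)) →
            ((H.deleteEdges {s(u, T.par u)}).induce {x | x ≠ T.par c}).Reachable
              ⟨z, hz.2⟩ ⟨r, hrp⟩ := by
          intro z hz
          obtain ⟨n, hn⟩ := T.root_anc z
          refine T.reach_up (T.par c) u r n z hn ?_ ?_ _ _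
          · rintro w _ hw rfl
            exact hz.2 (T.anc_antisymm hz.1 hw)
          · rintro w _ _ hw rfl
            exact hz.2 (T.anc_antisymm hz.1 (T.anc_trans hpu hw))
        have toC : ∀ z, T.Anc c z → ¬ T.Anc u z → ∀ hz : z ≠ T.par c,
            ((H.deleteEdges {s(u, T.par u)}).induce {x | x ≠ T.par c}).Reachable
              ⟨z, hz⟩ ⟨c, e5⟩ := by
          intro z hz hz' hzp
          obtain ⟨n, hn⟩ := hz
          refine T.reach_up (T.par c) u c n z hn (fun w hw _ => hup w hw) ?_ _ _
          rintro w _ _ hw rfl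
          exact hz' hw
        have edge : ∀ z t, H.Adj z t → T.PAnc t (T.par c) → ∀ (hz : z ≠ T.par c) (ht : t ≠ T.par c),
            ((H.deleteEdges {s(u, T.par u)}).induce {x | x ≠ T.par c}).Reachable
              ⟨z, hz⟩ ⟨t, ht⟩ := by
          intro z t hzt htp hz ht
          refine SimpleGraph.Adj.reachable ?_
          rw [SimpleGraph.comap_adj]
          simp only [Function.Embedding.subtype_apply, SimpleGraph.deleteEdges_adj,
            Set.mem_singleton_iff]
          refine ⟨hzt, fun he => ?_⟩
          rw [Sym2.eq_iff] at he
          have hct : ¬ T.Anc c t := fun h =>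
            hcp (T.anc_antisymm (T.anc_trans h htp.1) (T.anc_par c))
          rcases he with ⟨_, q⟩ | ⟨_, q⟩
          · exact hct (q ▸ hcpu)
          · exact hct (q ▸ hcu)
        have hupu : ¬ T.Anc u (T.par u) := fun h =>
          (T.par_adj u hu).ne (T.anc_antisymm h (T.anc_par u))
        have main : ((H.deleteEdges {s(u, T.par u)}).induce {x | x ≠ T.par c}).Reachable
              ⟨u, e1⟩ ⟨T.par u, e2⟩ := by
          have s1 : ((H.deleteEdges {s(u, T.par u)}).induce {x | x ≠ T.par c}).Reachable
              ⟨x', e4⟩ ⟨u, e1⟩ := by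
            obtain ⟨n, hn⟩ := hx'u
            exact T.reach_up (T.par c) u u n x' hn
              (fun w hw _ => hup w (T.anc_trans hcu hw)) (fun w _ h _ => h) _ _
          exact s1.symm.trans <| (edge x' hgu hx'b.1 hgp e4 hgp.2).trans <|
            (top hgu hgp).trans <| (top y hyp).symm.trans <|
            (edge x y hb.1 hyp e3 hyp.2).symm.trans <| (toC x hcx hux e3).trans
            (toC _ hcpu hupu e2).symm
        refine conn_of_adj (hH.2.2 (T.par c)) ?_
        rintro ⟨a, ha⟩ ⟨b, hb'⟩ hab
        rw [SimpleGraph.comap_adj] at hab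
        simp only [Function.Embedding.subtype_apply] at hab
        by_cases he : s(a, b) = s(u, T.par u)
        · rw [Sym2.eq_iff] at he
          rcases he with ⟨rfl, rfl⟩ | ⟨rfl, rfl⟩
          · exact main
          · exact main.symm
        · refine SimpleGraph.Adj.reachable ?_
          rw [SimpleGraph.comap_adj]
          simp only [Function.Embedding.subtype_apply, SimpleGraph.deleteEdges_adj,
            Set.mem_singleton_iff]
          exact ⟨hab, he⟩
    obtain ⟨a1, a2⟩ := hmu
    obtain ⟨b1, b2⟩ := hmpc
    rw [key] at a1 a2
    exact T.anc_antisymm (b2 _ a1) (a2 _ b1)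
  · rintro ⟨hcu, hcune⟩ rfl hgp
    refine ⟨T.par_adj u hu, fun hconn => ?_⟩
    have humu : T.Anc u mu := hmu.2 u fun x hx => hx.1
    have hup : ∀ w, T.Anc c w → w ≠ T.par c := by
      rintro w hw rfl
      exact hcp (T.anc_antisymm hw (T.anc_par c))
    have hr := hconn.preconnected ⟨c, hcp⟩ ⟨u, hup u hcu⟩
    refine (inv_of_reach (fun z => T.Anc c z.1 ∧ ¬ T.Anc u z.1) ?_ hr
      ⟨T.anc_refl c, fun h => hcune (T.anc_antisymm hcu h)⟩).2 (T.anc_refl u)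
    rintro ⟨a, ha⟩ ⟨b, hb⟩ hab ⟨hca, hua⟩
    rw [SimpleGraph.comap_adj] at hab
    simp only [Function.Embedding.subtype_apply, SimpleGraph.deleteEdges_adj,
      Set.mem_singleton_iff] at hab
    obtain ⟨hab, hne⟩ := hab
    change T.Anc c a at hca
    change ¬ T.Anc u a at hua
    change T.Anc c b ∧ ¬ T.Anc u b
    rcases T.edge_anc a b hab with hba | hba
    · have hba : T.Anc b a := hba
      refine ⟨?_, fun h => hua (T.anc_trans h hba)⟩
      by_contra hcb
      have hbc : T.Anc b c := (T.anc_total hba hca).resolve_right hcb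
      have hbc' : b ≠ c := by
        rintro rfl
        exact hcb (T.anc_refl _)
      refine hua (T.anc_trans humu (hmpc.1 a ⟨hca, b, ⟨T.anc_par_of_ne hbc hbc', hb⟩, hab, hba, ?_⟩))
      intro hpa
      by_cases hac : c = a
      · subst hac
        exact hb hpa.symm
      · exact hcb (hpa ▸ T.anc_par_of_ne hca hac)
    · have hba : T.Anc a b := hba
      refine ⟨T.anc_trans hca hba, fun hub => ?_⟩
      have hau : T.Anc a u := (T.anc_total hba hub).resolve_right hua
      have hau' : a ≠ u := by
        rintro rfl
        exact hua (T.anc_refl _)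
      by_cases hpb : T.par b = a
      · by_cases hub' : u = b
        · subst hub'
          subst hpb
          exact hne Sym2.eq_swap
        · exact hua (hpb ▸ T.anc_par_of_ne hub hub')
      · have := hg3 a ⟨hau, hau'⟩ ⟨b, hub, hab.symm, hba, hpb⟩
        exact hcp (T.anc_antisymm (T.anc_trans hca (T.anc_trans this hgp.1)) (T.anc_par c))
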